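/- arXiv:1708.06718 — 7 statements merged into one kernel-verified Lean document; each statement's English description precedes it below -/
import Mathlib

section
/- Let G be a simple graph with finite vertex set V, equipped with a family of canonical paths (p_{s,t})_{(s,t) ∈ V × V}. Then for every set S ⊆ V one has Σ_{e ∈ δ(S)} φ(e) ≥ |S| · |V \ S|; in particular |δ(S)| · φ_max ≥ |S| · |V \ S|. -/
/-- The edge boundary `δ(S)` of a vertex set `S`: the set of edges of `G` with
exactly one endpoint in `S`. -/
noncomputable def edgeBoundary {V : Type*} [Fintype V] (G : SimpleGraph V)
    (S : Finset V) : Finset (Sym2 V) := by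
  classical exact G.edgeFinset.filter (fun e => ∃ a ∈ S, ∃ b ∉ S, e = s(a, b))

/-- Given a family of canonical paths `p`, `phi G p e` counts the ordered pairs
`(s, t)` whose canonical path uses the edge `e`. -/
noncomputable def phi {V : Type*} [Fintype V] (G : SimpleGraph V)
    (p : ∀ s t : V, G.Walk s t) (e : Sym2 V) : ℕ := by
  classical exact (Finset.univ.filter (fun st : V × V => e ∈ (p st.1 st.2).edges)).card

/-- `phiMax G p` is the maximum of `phi G p e` over all edges `e` of `G`. -/
noncomputable def phiMax {V : Type*} [Fintype V] (G : SimpleGraph V)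
    (p : ∀ s t : V, G.Walk s t) : ℕ := by
  classical exact G.edgeFinset.sup (phi G p)

lemma mem_edgeBoundary_iff {V : Type*} [Fintype V] (G : SimpleGraph V)
    (S : Finset V) (e : Sym2 V) :
    e ∈ edgeBoundary G S ↔ e ∈ G.edgeSet ∧ ∃ a ∈ S, ∃ b ∉ S, e = s(a, b) := by
  classical
  unfold edgeBoundary
  simp only [Finset.mem_filter, SimpleGraph.mem_edgeFinset]

lemma phi_le_phiMax {V : Type*} [Fintype V] (G : SimpleGraph V)
    (p : ∀ s t : V, G.Walk s t) (e : Sym2 V) (he : e ∈ G.edgeSet) :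
    phi G p e ≤ phiMax G p := by
  classical
  unfold phiMax
  refine Finset.le_sup (f := phi G p) ?_
  rwa [SimpleGraph.mem_edgeFinset]

/-- For a simple graph with finite vertex set equipped with canonical
paths, for every `S ⊆ V` one has `Σ_{e ∈ δ(S)} φ(e) ≥ |S|·|V \ S|`; in particular
`|δ(S)| · φ_max ≥ |S|·|V \ S|`. -/
theorem sum_phi_edgeBoundary_ge {V : Type*} [Fintype V] [DecidableEq V]
    (G : SimpleGraph V) (p : ∀ s t : V, G.Walk s t) (S : Finset V) :
    S.card * Sᶜ.card ≤ ∑ e ∈ edgeBoundary G S, phi G p e ∧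
    S.card * Sᶜ.card ≤ (edgeBoundary G S).card * phiMax G p := by
  classical
  have h1 : S.card * Sᶜ.card ≤ ∑ e ∈ edgeBoundary G S, phi G p e := by
    rw [← Finset.card_product]
    refine le_trans (Finset.card_le_card (t := (edgeBoundary G S).biUnion (fun e =>
      Finset.univ.filter (fun st : V × V => e ∈ (p st.1 st.2).edges))) ?_)
      (le_trans Finset.card_biUnion_le ?_)
    · rintro ⟨s, t⟩ hst
      rw [Finset.mem_product, Finset.mem_compl] at hst
      obtain ⟨d, hd, h1, h2⟩ := (p s t).exists_boundary_dart (S : Set V)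
        (by simpa using hst.1) (by simpa using hst.2)
      rw [Finset.mem_biUnion]
      refine ⟨d.edge, ?_, ?_⟩
      · rw [mem_edgeBoundary_iff]
        exact ⟨d.edge_mem, d.fst, Finset.mem_coe.1 h1, d.snd,
          fun h => h2 (Finset.mem_coe.2 h), rfl⟩
      · rw [Finset.mem_filter]
        exact ⟨Finset.mem_univ _, List.mem_map_of_mem hd⟩
    · refine Finset.sum_le_sum fun e _ => le_of_eq ?_
      unfold phi
      congr
  refine ⟨h1, h1.trans ?_⟩
  rw [← smul_eq_mul]
  refine Finset.sum_le_card_nsmul _ _ _ fun e he => ?_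
  exact phi_le_phiMax G p e ((mem_edgeBoundary_iff G S e).1 he).1
end

section
/- (Sinclair's lemma) Let G be a simple graph with finite vertex set V, |V| = n, equipped with a family of canonical paths (p_{s,t})_{(s,t) ∈ V × V}. Then for every nonempty S ⊆ V with 2|S| ≤ n one has 2 · φ_max · |δ(S)| ≥ n · |S|; equivalently, the edge expansion of G is at least n/(2 φ_max). -/
/-- Sinclair's lemma: for every nonempty `S ⊆ V` with `2|S| ≤ n`,
one has `2 · φ_max · |δ(S)| ≥ n · |S|`, i.e. the edge expansion of `G` is at
least `n / (2 φ_max)`. -/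
theorem sinclair_lemma {V : Type*} [Fintype V] (G : SimpleGraph V)
    (p : ∀ s t : V, G.Walk s t) (S : Finset V) (hS : S.Nonempty)
    (hhalf : 2 * S.card ≤ Fintype.card V) :
    Fintype.card V * S.card ≤ 2 * phiMax G p * (edgeBoundary G S).card := by
  classical
  have key : (S ×ˢ Sᶜ) ⊆ (edgeBoundary G S).biUnion
      (fun e => Finset.univ.filter (fun st : V × V => e ∈ (p st.1 st.2).edges)) := by
    rintro ⟨s, t⟩ hst
    simp only [Finset.mem_product, Finset.mem_compl] at hst
    obtain ⟨d, hd, h1, h2⟩ := (p s t).exists_boundary_dart (S : Set V)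
      (by simpa using hst.1) (by simpa using hst.2)
    simp only [Finset.mem_biUnion, Finset.mem_filter, Finset.mem_univ, true_and]
    refine ⟨d.edge, ?_, ?_⟩
    · unfold edgeBoundary
      simp only [Finset.mem_filter, SimpleGraph.mem_edgeFinset]
      exact ⟨d.edge_mem, d.fst, by simpa using h1, d.snd, by simpa using h2, rfl⟩
    · exact List.mem_map_of_mem hd
  have hcard := (Finset.card_le_card key).trans
    (Finset.card_biUnion_le_card_mul _ _ (phiMax G p) (by
      intro e he
      have he' : e ∈ G.edgeFinset := by
        unfold edgeBoundary at he
        have h := (Finset.mem_filter.mp he).1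
        simpa using h
      have h : phi G p e ≤ phiMax G p := by
        unfold phiMax
        apply Finset.le_sup (f := phi G p)
        simpa using he'
      refine le_trans (le_of_eq ?_) h
      unfold phi
      congr))
  rw [Finset.card_product] at hcard
  have hc : S.card + Sᶜ.card = Fintype.card V := Finset.card_add_card_compl S
  have h2 : Fintype.card V ≤ 2 * Sᶜ.card := by omega
  calc Fintype.card V * S.card ≤ 2 * Sᶜ.card * S.card := Nat.mul_le_mul_right _ h2
    _ = 2 * (S.card * Sᶜ.card) := by ring
    _ ≤ 2 * ((edgeBoundary G S).card * phiMax G p) := Nat.mul_le_mul_left _ hcard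
    _ = _ := by ring
end

section
/- Let 0 < c < 1/2, let G be a d-regular simple graph on n vertices, and let X ≥ 0 be a real number such that every nonempty S ⊆ V with 2|S| ≤ n satisfies |δ(S)| ≥ X · |S| (i.e., the edge expansion of G is at least X). Then every separator (A, B, C) of G with separation constant c satisfies d · |C| ≥ c · X · n, i.e., |C| ≥ (c/d) · X · n. -/
/-- Let `0 < c < 1/2`, let `G` be a `d`-regular simple graph on `n`
vertices whose edge expansion is at least `X ≥ 0` (i.e. every nonempty `S` with
`2|S| ≤ n` satisfies `|δ(S)| ≥ X·|S|`). Then every separator `(A, B, C)` with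
separation constant `c` satisfies `d·|C| ≥ c·X·n`. -/
theorem separator_card_ge_of_expansion {V : Type*} [Fintype V] [DecidableEq V]
    (G : SimpleGraph V) (d : ℕ) (c X : ℝ)
    (hc0 : 0 < c) (hc : c < 1 / 2) (hX : 0 ≤ X)
    (hreg : ∀ v : V, Nat.card (G.neighborSet v) = d)
    (hexp : ∀ S : Finset V, S.Nonempty → 2 * S.card ≤ Fintype.card V →
      X * S.card ≤ ((edgeBoundary G S).card : ℝ))
    (A B C : Finset V)
    (hAB : Disjoint A B) (hAC : Disjoint A C) (hBC : Disjoint B C)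
    (hcover : A ∪ B ∪ C = Finset.univ)
    (hA : c * Fintype.card V ≤ A.card) (hAleB : A.card ≤ B.card)
    (hsep : ∀ a ∈ A, ∀ b ∈ B, ¬ G.Adj a b) :
    c * X * Fintype.card V ≤ d * C.card := by
  classical
  have h1 : c * X * Fintype.card V ≤ X * A.card := by
    nlinarith [mul_le_mul_of_nonneg_left hA hX]
  refine h1.trans ?_
  rcases A.eq_empty_or_nonempty with rfl | hne
  · simp only [Finset.card_empty, Nat.cast_zero, mul_zero]
    positivity
  have hcard : 2 * A.card ≤ Fintype.card V := by
    have h2 := Finset.card_union_of_disjoint hAB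
    have h3 := Finset.card_le_univ (A ∪ B)
    omega
  refine (hexp A hne hcard).trans ?_
  have hsub : edgeBoundary G A ⊆ C.biUnion (fun v => G.incidenceFinset v) := by
    intro e he
    unfold edgeBoundary at he
    simp only [Finset.mem_filter, SimpleGraph.mem_edgeFinset] at he
    obtain ⟨hE, a, ha, b, hb, rfl⟩ := he
    have hadj : G.Adj a b := hE
    have hbC : b ∈ C := by
      have hu : b ∈ A ∪ B ∪ C := by rw [hcover]; exact Finset.mem_univ b
      simp only [Finset.mem_union] at hu
      rcases hu with (h | h) | h
      · exact absurd h hb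
      · exact absurd hadj (hsep a ha b h)
      · exact h
    refine Finset.mem_biUnion.2 ⟨b, hbC, ?_⟩
    rw [SimpleGraph.mem_incidenceFinset]
    exact ⟨hE, Sym2.mem_mk_right a b⟩
  have hle : (edgeBoundary G A).card ≤ C.card * d := by
    refine (Finset.card_le_card hsub).trans ?_
    refine Finset.card_biUnion_le_card_mul _ _ _ ?_
    intro v _
    rw [SimpleGraph.card_incidenceFinset_eq_degree, ← hreg v, Nat.card_eq_fintype_card,
      SimpleGraph.card_neighborSet_eq_degree]
  rw [mul_comm]
  exact_mod_cast hle
end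

section
/- Let G be a d-regular simple graph with finite vertex set V, |V| = n, equipped with a family of canonical paths (p_{s,t})_{(s,t) ∈ V × V}, and let 0 < c < 1/2. Then every separator (A, B, C) of G with separation constant c satisfies 2 · d · φ_max · |C| ≥ c · n². -/
/-- For a `d`-regular simple graph on `n` vertices equipped with a
family of canonical paths, and `0 < c < 1/2`, every separator `(A, B, C)` with
separation constant `c` satisfies `2·d·φ_max·|C| ≥ c·n²`. -/
theorem separator_card_ge_of_canonical_paths {V : Type*} [Fintype V] [DecidableEq V]
    (G : SimpleGraph V) (d : ℕ) (c : ℝ)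
    (hc0 : 0 < c) (hc : c < 1 / 2)
    (hreg : ∀ v : V, Nat.card (G.neighborSet v) = d)
    (p : ∀ s t : V, G.Walk s t)
    (A B C : Finset V)
    (hAB : Disjoint A B) (hAC : Disjoint A C) (hBC : Disjoint B C)
    (hcover : A ∪ B ∪ C = Finset.univ)
    (hA : c * Fintype.card V ≤ A.card) (hAleB : A.card ≤ B.card)
    (hsep : ∀ a ∈ A, ∀ b ∈ B, ¬ G.Adj a b) :
    c * (Fintype.card V : ℝ) ^ 2 ≤ 2 * d * phiMax G p * C.card := by
  classical
  have hphi : ∀ v w : V, G.Adj v w →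
      (Finset.univ.filter (fun st : V × V => s(v, w) ∈ (p st.1 st.2).edges)).card
        ≤ phiMax G p := by
    intro v w h
    have h1 : phi G p s(v, w) ≤ phiMax G p := by
      unfold phiMax
      exact Finset.le_sup (f := phi G p) (by simpa using h)
    refine le_trans (le_of_eq ?_) h1
    unfold phi
    congr!
  have hsub : A ×ˢ Aᶜ ⊆ C.biUnion (fun v => (G.neighborFinset v).biUnion
      (fun w => Finset.univ.filter (fun st : V × V => s(v, w) ∈ (p st.1 st.2).edges))) := by
    rintro ⟨s, t⟩ hst
    rw [Finset.mem_product, Finset.mem_compl] at hst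
    obtain ⟨e, he, h1, h2⟩ := (p s t).exists_boundary_dart (A : Set V)
      (by simpa using hst.1) (by simpa using hst.2)
    have h1' : e.fst ∈ A := by simpa using h1
    have h2' : e.snd ∉ A := by simpa using h2
    have hC : e.snd ∈ C := by
      have h3 : e.snd ∈ A ∪ B ∪ C := by rw [hcover]; exact Finset.mem_univ _
      have h4 : e.snd ∉ B := fun h => hsep _ h1' _ h e.adj
      simp only [Finset.mem_union] at h3
      tauto
    simp only [Finset.mem_biUnion, Finset.mem_filter, Finset.mem_univ, true_and,
      SimpleGraph.mem_neighborFinset]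
    refine ⟨e.snd, hC, e.fst, e.adj.symm, ?_⟩
    rw [Sym2.eq_swap]
    exact List.mem_map.2 ⟨e, he, rfl⟩
  have hcard : A.card * Aᶜ.card ≤ C.card * (d * phiMax G p) := by
    rw [← Finset.card_product]
    refine (Finset.card_le_card hsub).trans ?_
    refine Finset.card_biUnion_le_card_mul _ _ _ fun v _ => ?_
    have hd : (G.neighborFinset v).card = d := by
      rw [← hreg v, Nat.card_eq_fintype_card, SimpleGraph.card_neighborSet_eq_degree]
      rfl
    rw [← hd]
    exact Finset.card_biUnion_le_card_mul _ _ _ fun w hw => hphi v w (by simpa using hw)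
  have hn : A.card + Aᶜ.card = Fintype.card V := Finset.card_add_card_compl A
  have hB : B.card ≤ Aᶜ.card := Finset.card_le_card fun x hx => by
    rw [Finset.mem_compl]
    exact fun h => Finset.disjoint_left.1 hAB h hx
  have hhalf : (Fintype.card V : ℝ) ≤ 2 * (Aᶜ.card : ℝ) := by
    have : Fintype.card V ≤ 2 * Aᶜ.card := by omega
    exact_mod_cast this
  have hcard' : (A.card : ℝ) * (Aᶜ.card : ℝ) ≤ C.card * (d * phiMax G p) := by
    exact_mod_cast hcard
  have hmul : (c * Fintype.card V) * (Fintype.card V : ℝ) ≤ A.card * (2 * (Aᶜ.card : ℝ)) :=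
    mul_le_mul hA hhalf (by positivity) (by positivity)
  nlinarith
end

section
/- For every real constant 0 < c < 1/3 there exist a real constant K > 0 and a sequence of 4-regular simple graphs (G_m)_{m ≥ 6}, where G_m has n_m = (6m − 12) · 2^m vertices, such that for every m ≥ 6: every separator (A, B, C) of G_m with separation constant c has size |C| ≥ n_m/(K · log n_m), and moreover G_m admits a partition (A, B, C) of its vertex set with no edge joining A to B, |A| ≥ n_m/3, |B| ≥ n_m/3, and |C| ≤ K · n_m/ log n_m. In particular, the smallest separators of G_m have size Θ(n_m / log n_m). -/
open Finset in
theorem sum_comp_inj {α β : Type} [Fintype α] [Fintype β] [DecidableEq α] [DecidableEq β]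
    (e : α → β) (he : Function.Injective e) (g : (α → Bool) → ℕ) :
    ∑ w : β → Bool, g (w ∘ e) = 2 ^ (Fintype.card β - Fintype.card α) * ∑ x, g x := by
  classical
  let p : β → Prop := fun b => b ∈ Set.range e
  let E : α ≃ {b // p b} := Equiv.ofInjective e he
  have h1 : ∑ w : β → Bool, g (w ∘ e)
      = ∑ q : ({b // p b} → Bool) × ({b // ¬ p b} → Bool), g (fun a => q.1 (E a)) := by
    refine Fintype.sum_equiv (Equiv.piEquivPiSubtypeProd p (fun _ => Bool)) _ _ ?_
    intro w
    rfl
  have h2 : ∑ q : {b // p b} → Bool, g (fun a => q (E a)) = ∑ x, g x := by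
    refine Fintype.sum_equiv (Equiv.arrowCongr E.symm (Equiv.refl Bool)) _ _ ?_
    intro w
    rfl
  rw [h1, Fintype.sum_prod_type_right]
  simp only [h2]
  rw [sum_const, smul_eq_mul, card_univ, Fintype.card_fun, Fintype.card_bool,
    Fintype.card_subtype_compl, ← Fintype.card_congr E]

/-- One forward step of the layered de Bruijn graph. -/
def dbStep (p k : ℕ) (u v : (Fin (p + 1) → Bool) × ZMod k) : Prop :=
  v.2 = u.2 + 1 ∧ ∀ j : Fin p, v.1 j.castSucc = u.1 j.succ

/-- The layered de Bruijn graph. -/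
def dbGraph (p k : ℕ) : SimpleGraph ((Fin (p + 1) → Bool) × ZMod k) :=
  SimpleGraph.fromRel (dbStep p k)

theorem one_ne_zero_of_three {k : ℕ} (hk : 3 ≤ k) : (1 : ZMod k) ≠ 0 := by
  haveI : Fact (1 < k) := ⟨by omega⟩
  exact one_ne_zero

theorem two_ne_zero_of_three {k : ℕ} (hk : 3 ≤ k) : (1 + 1 : ZMod k) ≠ 0 := by
  intro h
  have : ((2 : ℕ) : ZMod k) = 0 := by push_cast; rw [← h]; norm_num
  rw [ZMod.natCast_eq_zero_iff] at this
  exact absurd (Nat.le_of_dvd (by norm_num) this) (by omega)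

theorem dbStep_adj {p k : ℕ} (hk : 3 ≤ k) {u v : (Fin (p + 1) → Bool) × ZMod k} :
    (dbGraph p k).Adj u v ↔ dbStep p k u v ∨ dbStep p k v u := by
  unfold dbGraph
  rw [SimpleGraph.fromRel_adj]
  refine ⟨fun h => h.2, fun h => ⟨?_, h⟩⟩
  rintro rfl
  have h1 : u.2 = u.2 + 1 := by
    rcases h with h | h <;> exact h.1
  exact one_ne_zero_of_three hk (by simpa using h1)

theorem dbGraph_regular (p k : ℕ) (hk : 3 ≤ k) (v : (Fin (p + 1) → Bool) × ZMod k) :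
    Nat.card ((dbGraph p k).neighborSet v) = 4 := by
  let F : Bool ⊕ Bool → (dbGraph p k).neighborSet v := Sum.elim
    (fun b => ⟨(Fin.snoc (α := fun _ => Bool) (Fin.tail v.1) b, v.2 + 1), by
      rw [SimpleGraph.mem_neighborSet, dbStep_adj hk]
      left
      refine ⟨rfl, fun j => ?_⟩
      simp [Fin.snoc_castSucc, Fin.tail]⟩)
    (fun b => ⟨(Fin.cons (α := fun _ => Bool) b (Fin.init v.1), v.2 - 1), by
      rw [SimpleGraph.mem_neighborSet, dbStep_adj hk]
      right
      refine ⟨by simp, fun j => ?_⟩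
      simp [Fin.init]⟩)
  have hF : Function.Bijective F := by
    constructor
    · have key : (v.2 + 1 : ZMod k) ≠ v.2 - 1 := by
        intro h
        apply two_ne_zero_of_three hk
        have : (1 + 1 : ZMod k) = (v.2 + 1) - (v.2 - 1) := by ring
        rw [this, h, sub_self]
      rintro (a | a) (b | b) h
      · have h' := congrFun (congrArg (fun z => z.1.1) h) (Fin.last p)
        simp [F] at h'
        rw [h']
      · exact absurd (congrArg (fun z => z.1.2) h) key
      · exact absurd (congrArg (fun z => z.1.2) h).symm key
      · have h' := congrFun (congrArg (fun z => z.1.1) h) 0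
        simp [F] at h'
        rw [h']
    · rintro ⟨⟨y, j⟩, hy⟩
      rw [SimpleGraph.mem_neighborSet, dbStep_adj hk] at hy
      rcases hy with ⟨h1, h2⟩ | ⟨h1, h2⟩
      · refine ⟨Sum.inl (y (Fin.last p)), ?_⟩
        apply Subtype.ext
        refine Prod.ext ?_ h1.symm
        funext i
        refine Fin.lastCases ?_ (fun i => ?_) i
        · simp [F]
        · simpa [F, Fin.tail] using (h2 i).symm
      · refine ⟨Sum.inr (y 0), ?_⟩
        apply Subtype.ext
        refine Prod.ext ?_ (by simp at h1; simp [F, h1])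
        funext i
        refine Fin.cases ?_ (fun i => ?_) i
        · simp [F]
        · simpa [F, Fin.init] using h2 i
  rw [← Nat.card_congr (Equiv.ofBijective F hF)]
  simp

/-- Window of length `p+1` starting at `s`. -/
def win (p L s : ℕ) (w : Fin L → Bool) : Fin (p + 1) → Bool :=
  fun j => if h : s + j < L then w ⟨s + j, h⟩ else false

theorem win_step (p L s k : ℕ) (w : Fin L → Bool) (i : ZMod k) :
    dbStep p k (win p L s w, i + (s : ZMod k)) (win p L (s + 1) w, i + ((s + 1 : ℕ) : ZMod k)) := by
  refine ⟨by push_cast; ring, fun j => ?_⟩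
  simp only [win, Fin.val_castSucc, Fin.val_succ]
  have : s + 1 + (j : ℕ) = s + (j + 1) := by ring
  simp only [this]

theorem sum_win (p L s : ℕ) (hs : s + (p + 1) ≤ L) (g : (Fin (p + 1) → Bool) → ℕ) :
    ∑ w, g (win p L s w) = 2 ^ (L - (p + 1)) * ∑ x, g x := by
  have := sum_comp_inj (fun j : Fin (p + 1) => (⟨s + j, by omega⟩ : Fin L))
    (fun a b h => by simp at h; exact Fin.ext h) g
  rw [Fintype.card_fin, Fintype.card_fin] at this
  rw [← this]
  refine Finset.sum_congr rfl fun w _ => ?_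
  congr 1
  funext j
  have : s + (j : ℕ) < L := by omega
  simp [win, this]

theorem sum_win2 (p L s : ℕ) (h0 : p + 1 ≤ s) (hs : s + (p + 1) ≤ L)
    (g h : (Fin (p + 1) → Bool) → ℕ) :
    ∑ w, g (win p L 0 w) * h (win p L s w)
      = 2 ^ (L - 2 * (p + 1)) * ((∑ x, g x) * ∑ y, h y) := by
  have := sum_comp_inj (Sum.elim (fun j : Fin (p + 1) => (⟨j, by omega⟩ : Fin L))
      (fun j : Fin (p + 1) => (⟨s + j, by omega⟩ : Fin L)))
    (by
      rintro (a | a) (b | b) h <;> simp at h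
      · rw [Fin.ext h]
      · omega
      · omega
      · rw [Fin.ext h]) (fun z => g (z ∘ Sum.inl) * h (z ∘ Sum.inr))
  rw [Fintype.card_fin, Fintype.card_sum, Fintype.card_fin, ← two_mul] at this
  have e2 : ∑ z : Fin (p + 1) ⊕ Fin (p + 1) → Bool, g (z ∘ Sum.inl) * h (z ∘ Sum.inr)
      = (∑ x, g x) * ∑ y, h y := by
    rw [Finset.sum_mul_sum, ← Fintype.sum_prod_type']
    exact Fintype.sum_equiv (Equiv.sumArrowEquivProdArrow _ _ _) _ _ (fun z => rfl)
  rw [e2] at this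
  rw [← this]
  refine Finset.sum_congr rfl fun w _ => ?_
  congr 2
  · funext j
    have : (j : ℕ) < L := by omega
    simp [win, this]
  · funext j
    have : s + (j : ℕ) < L := by omega
    simp [win, this]

theorem sum_range_zmod (k : ℕ) [NeZero k] (f : ZMod k → ℕ) (a : ZMod k) :
    ∑ t ∈ Finset.range k, f (a + (t : ZMod k)) = ∑ j, f j := by
  rw [← Equiv.sum_comp (Equiv.addLeft a) f]
  refine Finset.sum_bij' (fun t _ => (t : ZMod k)) (fun j _ => j.val) ?_ ?_ ?_ ?_ ?_
  · intros; simp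
  · intro j _; simpa using ZMod.val_lt j
  · intro t ht; simpa using ZMod.val_cast_of_lt (Finset.mem_range.mp ht)
  · intro j _; simp
  · intros; simp

open Finset Classical in
theorem db_lower (p k : ℕ) (hk : 3 ≤ k) [NeZero k]
    (A B C : Finset ((Fin (p + 1) → Bool) × ZMod k)) (hAB : Disjoint A B)
    (hcov : ∀ v, v ∈ A ∨ v ∈ B ∨ v ∈ C)
    (hadj : ∀ a ∈ A, ∀ b ∈ B, ¬ (dbGraph p k).Adj a b) :
    #A * #B ≤ k * 2 ^ (p + 1) * (p + 1 + k) * #C := by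
  let ind (S : Finset ((Fin (p + 1) → Bool) × ZMod k)) (x : Fin (p + 1) → Bool) (i : ZMod k) : ℕ :=
    if (x, i) ∈ S then 1 else 0
  have hcard : ∀ S, ∑ i, ∑ x, ind S x i = #S := by
    intro S
    rw [← Fintype.sum_prod_type_right (f := fun v => ind S v.1 v.2)]
    simp [ind]
  let L := 2 * (p + 1) + k
  -- pointwise inequality
  have hpt : ∀ τ ∈ range k, ∀ (i : ZMod k) (w : Fin L → Bool),
      ind A (win p L 0 w) i * ind B (win p L (p + 1 + τ) w) (i + ((p + 1 + τ : ℕ) : ZMod k))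
      ≤ ∑ s ∈ range (p + 1 + k), ind C (win p L s w) (i + (s : ZMod k)) := by
    intro τ hτ i w
    rw [mem_range] at hτ
    by_contra! hlt
    have hall : ∀ s < p + 1 + k, (win p L s w, i + (s : ZMod k)) ∉ C := by
      intro s hs hmem
      have h1 : ind C (win p L s w) (i + (s : ZMod k)) ≤
        ∑ s ∈ range (p + 1 + k), ind C (win p L s w) (i + (s : ZMod k)) :=
        single_le_sum (f := fun s : ℕ => ind C (win p L s w) (i + (s : ZMod k)))
          (fun _ _ => Nat.zero_le _) (mem_range.mpr hs)
      have h2 : ind C (win p L s w) (i + (s : ZMod k)) = 1 := if_pos hmem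
      have h3 : ind A (win p L 0 w) i *
          ind B (win p L (p + 1 + τ) w) (i + ((p + 1 + τ : ℕ) : ZMod k)) ≤ 1 * 1 := by
        apply Nat.mul_le_mul <;> simp only [ind] <;> split_ifs <;> simp
      omega
    have hne : ind A (win p L 0 w) i *
          ind B (win p L (p + 1 + τ) w) (i + ((p + 1 + τ : ℕ) : ZMod k)) ≠ 0 := by omega
    have hA : (win p L 0 w, i) ∈ A := by
      by_contra h
      exact hne (by simp [ind, h])
    have hB : (win p L (p + 1 + τ) w, i + ((p + 1 + τ : ℕ) : ZMod k)) ∈ B := by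
      by_contra h
      apply hne
      simp only [ind]
      rw [if_neg h, mul_zero]
    have hind : ∀ s ≤ p + 1 + τ, (win p L s w, i + (s : ZMod k)) ∈ A := by
      intro s
      induction s with
      | zero => intro _; simpa using hA
      | succ s ih =>
        intro hs
        have h1 := ih (by omega)
        rcases hcov (win p L (s + 1) w, i + ((s + 1 : ℕ) : ZMod k)) with h | h | h
        · exact h
        · exact absurd ((dbStep_adj hk).mpr (Or.inl (win_step p L s k w i))) (hadj _ h1 _ h)
        · exact absurd h (hall _ (by omega))
    exact disjoint_left.mp hAB (hind _ le_rfl) hB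
  have hsum := sum_le_sum fun τ hτ => sum_le_sum fun i (_ : i ∈ (univ : Finset (ZMod k))) =>
    sum_le_sum fun w (_ : w ∈ (univ : Finset (Fin L → Bool))) => hpt τ hτ i w
  have hR : ∑ i : ZMod k, ∑ w : Fin L → Bool,
      ∑ s ∈ range (p + 1 + k), ind C (win p L s w) (i + (s : ZMod k))
      = (p + 1 + k) * (2 ^ (p + 1 + k) * #C) := by
    have : ∀ s ∈ range (p + 1 + k), ∑ i : ZMod k, ∑ w : Fin L → Bool,
        ind C (win p L s w) (i + (s : ZMod k)) = 2 ^ (p + 1 + k) * #C := by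
      intro s hs
      rw [mem_range] at hs
      have h1 : ∀ i : ZMod k, ∑ w : Fin L → Bool, ind C (win p L s w) (i + (s : ZMod k))
          = 2 ^ (p + 1 + k) * ∑ x, ind C x (i + (s : ZMod k)) := by
        intro i
        rw [sum_win p L s (by simp only [L]; omega) (fun x => ind C x (i + (s : ZMod k)))]
        congr 2
        simp only [L]; omega
      simp only [h1]
      rw [← mul_sum, ← hcard C]
      congr 1
      exact Equiv.sum_comp (Equiv.addRight (s : ZMod k)) (fun i => ∑ x, ind C x i)
    simp only [sum_comm (s := (univ : Finset (Fin L → Bool))) (t := range (p + 1 + k))]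
    rw [sum_comm, sum_congr rfl this]
    simp
  have hL : ∑ τ ∈ range k, ∑ i : ZMod k, ∑ w : Fin L → Bool,
      ind A (win p L 0 w) i * ind B (win p L (p + 1 + τ) w) (i + ((p + 1 + τ : ℕ) : ZMod k))
      = 2 ^ k * (#A * #B) := by
    have h1 : ∀ τ ∈ range k, ∀ i : ZMod k, ∑ w : Fin L → Bool,
      ind A (win p L 0 w) i * ind B (win p L (p + 1 + τ) w) (i + ((p + 1 + τ : ℕ) : ZMod k))
      = 2 ^ k * ((∑ x, ind A x i) * ∑ y, ind B y (i + ((p + 1 + τ : ℕ) : ZMod k))) := by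
      intro τ hτ i
      rw [mem_range] at hτ
      rw [sum_win2 p L (p + 1 + τ) (by omega) (by simp only [L]; omega) (fun x => ind A x i)
        (fun y => ind B y (i + ((p + 1 + τ : ℕ) : ZMod k)))]
      congr 2
      simp only [L]; omega
    rw [sum_congr rfl fun τ hτ => sum_congr rfl fun i _ => h1 τ hτ i, sum_comm]
    simp only [← mul_sum]
    congr 1
    have h2 : ∀ i : ZMod k, ∑ τ ∈ range k, ∑ y, ind B y (i + ((p + 1 + τ : ℕ) : ZMod k)) = #B := by
      intro i
      rw [← hcard B, ← sum_range_zmod k (fun j => ∑ y, ind B y j) (i + ((p + 1 : ℕ) : ZMod k))]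
      refine sum_congr rfl fun τ _ => ?_
      congr 1
      funext y
      congr 1
      push_cast
      ring
    simp only [h2]
    rw [← sum_mul, hcard]
  rw [hL] at hsum
  simp only [hR] at hsum
  rw [sum_const, card_range, smul_eq_mul] at hsum
  have h2 : 0 < 2 ^ k := by positivity
  refine Nat.le_of_mul_le_mul_left (hsum.trans (le_of_eq ?_)) h2
  rw [pow_add 2 (p + 1) k]
  ring

theorem zmod_succ_val (k : ℕ) [NeZero k] (a : ZMod k) :
    (a + 1).val = a.val + 1 ∨ (a + 1).val = 0 := by
  rcases Nat.lt_or_ge (a.val + 1) k with h | h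
  · left
    have : a + 1 = ((a.val + 1 : ℕ) : ZMod k) := by push_cast; simp
    rw [this, ZMod.val_cast_of_lt h]
  · right
    have h1 := ZMod.val_lt a
    have : a + 1 = ((a.val + 1 : ℕ) : ZMod k) := by push_cast; simp
    have h2 : a.val + 1 = k := by omega
    rw [this, h2]
    simp

theorem level_ncard (p k : ℕ) [NeZero k] (S : Finset ℕ) (hS : ∀ x ∈ S, x < k) :
    {v : (Fin (p + 1) → Bool) × ZMod k | v.2.val ∈ S}.ncard = 2 ^ (p + 1) * S.card := by
  classical
  have h1 : {v : (Fin (p + 1) → Bool) × ZMod k | v.2.val ∈ S}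
      = (((Finset.univ : Finset (Fin (p + 1) → Bool)) ×ˢ (S.image (fun x : ℕ => (x : ZMod k))) :
        Finset ((Fin (p + 1) → Bool) × ZMod k)) : Set _) := by
    ext ⟨x, i⟩
    simp only [Set.mem_ofPred_eq, Finset.coe_product, Set.mem_prod, Finset.coe_univ, Set.mem_univ,
      true_and, Finset.mem_coe, Finset.mem_image]
    constructor
    · intro h
      exact ⟨i.val, h, by simp⟩
    · rintro ⟨a, ha, rfl⟩
      rwa [ZMod.val_cast_of_lt (hS a ha)]
  rw [h1, Set.ncard_coe_finset, Finset.card_product, Finset.card_image_of_injOn]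
  · simp
  · intro a ha b hb h
    have := congrArg ZMod.val h
    simpa [ZMod.val_cast_of_lt (hS a ha), ZMod.val_cast_of_lt (hS b hb)] using this


/-- For every `0 < c < 1/3` there are a constant `K > 0` and a
sequence of `4`-regular simple graphs `(G_m)_{m ≥ 6}` on
`n_m = (6m − 12)·2^m` vertices such that for every `m ≥ 6`: every separator
`(A, B, C)` of `G_m` with separation constant `c` has size
`|C| ≥ n_m/(K·log n_m)`, and `G_m` admits a partition `(A, B, C)` with no edge
joining `A` to `B`, `|A| ≥ n_m/3`, `|B| ≥ n_m/3` and `|C| ≤ K·n_m/log n_m`;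
so the smallest separators of `G_m` have size `Θ(n_m/log n_m)`. -/
theorem exists_graph_sequence_separators_theta_n_div_log_n
    (c : ℝ) (hc0 : 0 < c) (hc : c < 1 / 3) :
    ∃ K : ℝ, 0 < K ∧
    ∃ (V : ℕ → Type) (G : ∀ m, SimpleGraph (V m)),
      ∀ m : ℕ, 6 ≤ m →
        Finite (V m) ∧
        Nat.card (V m) = (6 * m - 12) * 2 ^ m ∧
        (∀ v : V m, Nat.card ((G m).neighborSet v) = 4) ∧
        (∀ A B C : Set (V m),
          Disjoint A B → Disjoint A C → Disjoint B C → A ∪ B ∪ C = Set.univ →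
          c * (((6 * m - 12) * 2 ^ m : ℕ) : ℝ) ≤ A.ncard → A.ncard ≤ B.ncard →
          (∀ a ∈ A, ∀ b ∈ B, ¬ (G m).Adj a b) →
          (((6 * m - 12) * 2 ^ m : ℕ) : ℝ) /
              (K * Real.log (((6 * m - 12) * 2 ^ m : ℕ) : ℝ)) ≤ C.ncard) ∧
        (∃ A B C : Set (V m),
          Disjoint A B ∧ Disjoint A C ∧ Disjoint B C ∧ A ∪ B ∪ C = Set.univ ∧
          (∀ a ∈ A, ∀ b ∈ B, ¬ (G m).Adj a b) ∧
          (((6 * m - 12) * 2 ^ m : ℕ) : ℝ) / 3 ≤ A.ncard ∧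
          (((6 * m - 12) * 2 ^ m : ℕ) : ℝ) / 3 ≤ B.ncard ∧
          (C.ncard : ℝ) ≤ K * (((6 * m - 12) * 2 ^ m : ℕ) : ℝ) /
              Real.log (((6 * m - 12) * 2 ^ m : ℕ) : ℝ)) := by
  have hlog2 : 0 < Real.log 2 := Real.log_pos (by norm_num)
  refine ⟨7 / (c ^ 2 * Real.log 2) + 7, by positivity, fun m => (Fin (m - 1 + 1) → Bool) × ZMod (6 * m - 12),
    fun m => dbGraph (m - 1) (6 * m - 12), ?_⟩
  intro m hm
  obtain ⟨p, rfl⟩ : ∃ p, m = p + 1 := ⟨m - 1, by omega⟩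
  simp only [Nat.add_sub_cancel]
  set k := 6 * (p + 1) - 12 with hkdef
  have hk3 : 3 ≤ k := by omega
  haveI : NeZero k := ⟨by omega⟩
  set N : ℕ := k * 2 ^ (p + 1) with hN
  have hkR : (k : ℝ) = 6 * ((p + 1 : ℕ) : ℝ) - 12 := by
    rw [hkdef, Nat.cast_sub (by omega)]; push_cast; ring
  have hmR : (6 : ℝ) ≤ ((p + 1 : ℕ) : ℝ) := by exact_mod_cast hm
  set M : ℝ := ((p + 1 : ℕ) : ℝ) with hM
  have hNR : (N : ℝ) = k * 2 ^ (p + 1) := by rw [hN]; push_cast; ring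
  have hkpos : (0 : ℝ) < k := by rw [hkR]; linarith
  have hNpos : (0 : ℝ) < N := by rw [hNR]; positivity
  have hlogeq : Real.log N = Real.log k + M * Real.log 2 := by
    rw [hNR, Real.log_mul hkpos.ne' (by positivity), Real.log_pow]
  have hlogk : 0 ≤ Real.log k := Real.log_nonneg (by rw [hkR]; linarith)
  have hlogN1 : M * Real.log 2 ≤ Real.log N := by rw [hlogeq]; linarith
  have hlogN2 : Real.log N ≤ 7 * M := by
    have h1 := Real.log_le_sub_one_of_pos hkpos
    have h2 := Real.log_two_lt_d9
    have h3 : M * Real.log 2 ≤ M * 1 := mul_le_mul_of_nonneg_left (by linarith) (by linarith)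
    rw [hlogeq]; linarith
  have hlogNpos : 0 < Real.log N := lt_of_lt_of_le (by positivity) hlogN1
  refine ⟨inferInstance, ?_, dbGraph_regular p k hk3, ?_, ?_⟩
  · change Nat.card ((Fin (p + 1) → Bool) × ZMod k) = N
    rw [Nat.card_prod, Nat.card_zmod, hN, mul_comm]; simp
  · intro A B C hAB hAC hBC hcov hA hAle hadj
    classical
    have hlow := db_lower p k hk3 A.toFinset B.toFinset C.toFinset
      (by simpa using hAB) (by
        intro v
        have : v ∈ A ∪ B ∪ C := by rw [hcov]; trivial
        simpa [or_assoc] using this) (by simpa using hadj)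
    rw [← Set.ncard_eq_toFinset_card', ← Set.ncard_eq_toFinset_card',
      ← Set.ncard_eq_toFinset_card', ← hN] at hlow
    have hlowR : (A.ncard : ℝ) * B.ncard ≤ N * (M + k) * C.ncard := by
      rw [hM]; exact_mod_cast hlow
    have hAleR : (A.ncard : ℝ) ≤ B.ncard := by exact_mod_cast hAle
    have h1 : (c * N) * (c * N) ≤ A.ncard * B.ncard :=
      mul_le_mul hA (hA.trans hAleR) (by positivity) (by positivity)
    have h2 : c ^ 2 * N ≤ (M + k) * C.ncard := by
      refine le_of_mul_le_mul_left ?_ hNpos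
      calc (N : ℝ) * (c ^ 2 * N) = (c * N) * (c * N) := by ring
        _ ≤ _ := h1.trans hlowR
        _ = _ := by ring
    have h3 : c ^ 2 * N ≤ 7 * M * C.ncard :=
      h2.trans (mul_le_mul_of_nonneg_right (by rw [hkR]; linarith) (by positivity))
    rw [div_le_iff₀ (by positivity)]
    have h4 : 7 / (c ^ 2 * Real.log 2) * (M * Real.log 2)
        ≤ (7 / (c ^ 2 * Real.log 2) + 7) * Real.log N :=
      mul_le_mul (by linarith) hlogN1 (by positivity) (by positivity)
    have h5 : 7 / (c ^ 2 * Real.log 2) * (M * Real.log 2) = 7 * M / c ^ 2 := by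
      field_simp
    rw [h5] at h4
    calc (N : ℝ) ≤ 7 * M * C.ncard / c ^ 2 := by
          rw [le_div_iff₀ (by positivity)]; linarith
      _ = C.ncard * (7 * M / c ^ 2) := by ring
      _ ≤ _ := mul_le_mul_of_nonneg_left h4 (by positivity)
  · set h := 3 * (p + 1) - 6 with hh
    have hkh : k = 2 * h := by omega
    have hhR : (h : ℝ) = 3 * M - 6 := by
      rw [hh, Nat.cast_sub (by omega), hM]; push_cast; ring
    have hsub : ∀ n : ℕ, n = h - 1 → (n : ℝ) = 3 * M - 7 := by
      rintro n rfl
      rw [Nat.cast_sub (by omega), hhR]; push_cast; ring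
    refine ⟨{v | v.2.val ∈ Finset.Ioo 0 h}, {v | v.2.val ∈ Finset.Ioo h k},
      {v | v.2.val ∈ ({0, h} : Finset ℕ)}, ?_, ?_, ?_, ?_, ?_, ?_, ?_, ?_⟩
    · rw [Set.disjoint_left]; intro v
      simp only [Set.mem_ofPred_eq, Finset.mem_Ioo, Finset.mem_insert, Finset.mem_singleton]
      omega
    · rw [Set.disjoint_left]; intro v
      simp only [Set.mem_ofPred_eq, Finset.mem_Ioo, Finset.mem_insert, Finset.mem_singleton]
      omega
    · rw [Set.disjoint_left]; intro v
      simp only [Set.mem_ofPred_eq, Finset.mem_Ioo, Finset.mem_insert, Finset.mem_singleton]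
      omega
    · ext v
      have := ZMod.val_lt v.2
      simp only [Set.mem_union, Set.mem_ofPred_eq, Finset.mem_Ioo, Finset.mem_insert,
        Finset.mem_singleton, Set.mem_univ, iff_true]
      omega
    · intro a ha b hb hadj
      rw [Set.mem_ofPred_eq, Finset.mem_Ioo] at ha hb
      rw [dbStep_adj hk3] at hadj
      rcases hadj with ⟨h1, _⟩ | ⟨h1, _⟩
      · have := zmod_succ_val k a.2
        rw [← h1] at this
        omega
      · have := zmod_succ_val k b.2
        rw [← h1] at this
        omega
    · have e := level_ncard p k (Finset.Ioo 0 h) (by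
        intro x hx; rw [Finset.mem_Ioo] at hx; omega)
      refine le_trans ?_ (le_of_eq (congrArg (Nat.cast (R := ℝ)) e).symm)
      rw [Nat.cast_mul (2 ^ (p + 1)),
        hsub (Finset.Ioo 0 h).card (by rw [Nat.card_Ioo]; omega), hNR, hkR]
      push_cast
      have : (0 : ℝ) < 2 ^ (p + 1) := by positivity
      nlinarith
    · have e := level_ncard p k (Finset.Ioo h k) (by
        intro x hx; rw [Finset.mem_Ioo] at hx; omega)
      refine le_trans ?_ (le_of_eq (congrArg (Nat.cast (R := ℝ)) e).symm)
      rw [Nat.cast_mul (2 ^ (p + 1)),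
        hsub (Finset.Ioo h k).card (by rw [Nat.card_Ioo]; omega), hNR, hkR]
      push_cast
      have : (0 : ℝ) < 2 ^ (p + 1) := by positivity
      nlinarith
    · have e := level_ncard p k ({0, h} : Finset ℕ) (by
        intro x hx; rw [Finset.mem_insert, Finset.mem_singleton] at hx; omega)
      refine le_trans (le_of_eq (congrArg (Nat.cast (R := ℝ)) e)) ?_
      rw [Finset.card_pair (by omega), le_div_iff₀ hlogNpos]
      push_cast
      have hp : (0 : ℝ) < 2 ^ (p + 1) := by positivity
      have h0 : 0 ≤ 7 / (c ^ 2 * Real.log 2) := by positivity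
      calc (2 : ℝ) ^ (p + 1) * 2 * Real.log N ≤ 2 ^ (p + 1) * 2 * (7 * M) :=
            mul_le_mul_of_nonneg_left hlogN2 (by positivity)
        _ ≤ 7 * (k * 2 ^ (p + 1)) := by rw [hkR]; nlinarith
        _ = 7 * N := by rw [hNR]
        _ ≤ _ := mul_le_mul_of_nonneg_right (by linarith) hNpos.le
end

section
/- For every integer m ≥ 3 and every real constant 0 < c < 1/2, every separator (A, B, C) with separation constant c of the cube-connected cycles graph CCC_m on n = m · 2^m vertices satisfies 24m · |C| ≥ c · n; in particular all such separators have size Ω(n / log n). -/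
/-- The cube-connected cycles graph `CCC_m`: vertex set `{0,1}^m × ℤ/mℤ`, with
`(v, i)` adjacent to `(v, i+1)`, to `(v, i−1)`, and to `(v + e_i, i)`, where
`e_i` is the `i`-th standard basis vector (coordinates mod `2`, second
component mod `m`). -/
def CCC (m : ℕ) : SimpleGraph ((ZMod m → ZMod 2) × ZMod m) :=
  SimpleGraph.fromRel (fun x y =>
    (x.1 = y.1 ∧ y.2 = x.2 + 1) ∨ (x.2 = y.2 ∧ y.1 = x.1 + Pi.single x.2 1))

open Classical in
/-- Number of points of `A` which `f` moves out of `A`. -/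
noncomputable def exitCount {V : Type*} [Fintype V] (A : Finset V) (f : V → V) : ℕ :=
  (A.filter (fun x => f x ∉ A)).card

lemma exitCount_comp {V : Type*} [Fintype V] (A : Finset V) (f g : V → V)
    (hf : Function.Injective f) :
    exitCount A (g ∘ f) ≤ exitCount A f + exitCount A g := by
  classical
  unfold exitCount
  have h : A.filter (fun x => (g ∘ f) x ∉ A) ⊆
      A.filter (fun x => f x ∉ A) ∪
        (A.filter (fun x => g x ∉ A)).preimage f hf.injOn := by
    intro x hx
    simp only [Finset.mem_filter, Finset.mem_union, Finset.mem_preimage,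
      Function.comp_apply] at hx ⊢
    tauto
  refine (Finset.card_le_card h).trans ((Finset.card_union_le _ _).trans ?_)
  apply Nat.add_le_add_left
  apply Finset.card_le_card_of_injOn f
  · intro x hx
    simpa using hx
  · exact hf.injOn

lemma exitCount_iterate {V : Type*} [Fintype V] (A : Finset V) (f : V → V)
    (hf : Function.Injective f) (K : ℕ) (hK : exitCount A f ≤ K) (t : ℕ) :
    exitCount A (f^[t]) ≤ t * K := by
  induction t with
  | zero =>
    classical
    rw [zero_mul, Nat.le_zero, exitCount, Finset.card_eq_zero, Finset.filter_eq_empty_iff]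
    intro x hx h
    exact h hx
  | succ t ih =>
    rw [Function.iterate_succ]
    have := exitCount_comp A f (f^[t]) hf
    rw [Nat.succ_mul]
    omega

/-- Sum over all displacements. -/
lemma sum_exitCount {V : Type*} [Fintype V] [AddCommGroup V] [DecidableEq V] (A : Finset V) :
    ∑ d : V, exitCount A (fun x => x + d) = A.card * (Aᶜ).card := by
  classical
  unfold exitCount
  simp_rw [Finset.card_filter]
  rw [Finset.sum_comm, Finset.card_eq_sum_ones A, Finset.sum_mul]
  refine Finset.sum_congr rfl fun x _ => ?_
  rw [one_mul, ← Finset.card_filter]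
  apply Finset.card_bij (fun d _ => x + d)
  · intro d hd; simpa using hd
  · intro a _ b _ h; simpa using h
  · intro b hb
    exact ⟨b - x, by simpa using hb, by simp⟩

/-- The step along the cycle. -/
def cycStep (m : ℕ) (x : (ZMod m → ZMod 2) × ZMod m) : (ZMod m → ZMod 2) × ZMod m :=
  (x.1, x.2 + 1)

/-- Conditional flip according to `u`. -/
def flipStep (m : ℕ) (u : ZMod m → ZMod 2) (x : (ZMod m → ZMod 2) × ZMod m) :
    (ZMod m → ZMod 2) × ZMod m :=
  (x.1 + Pi.single x.2 (u x.2), x.2)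

lemma cycStep_inj (m : ℕ) : Function.Injective (cycStep m) := by
  rintro ⟨v, i⟩ ⟨w, j⟩ h
  simpa [cycStep] using h

lemma flipStep_inj (m : ℕ) (u : ZMod m → ZMod 2) : Function.Injective (flipStep m u) := by
  rintro ⟨v, i⟩ ⟨w, j⟩ h
  simp only [flipStep, Prod.mk.injEq] at h
  obtain ⟨h1, rfl⟩ := h
  simpa using h1

lemma cycStep_iter (m : ℕ) (t : ℕ) (x : (ZMod m → ZMod 2) × ZMod m) :
    (cycStep m)^[t] x = (x.1, x.2 + t) := by
  induction t with
  | zero => simp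
  | succ t ih =>
    rw [Function.iterate_succ_apply', ih]
    simp [cycStep, add_assoc]

lemma round_iter (m : ℕ) (u : ZMod m → ZMod 2) (t : ℕ) (x : (ZMod m → ZMod 2) × ZMod m) :
    (cycStep m ∘ flipStep m u)^[t] x =
      (x.1 + ∑ k ∈ Finset.range t, Pi.single (x.2 + (k : ZMod m)) (u (x.2 + (k : ZMod m))),
        x.2 + t) := by
  induction t with
  | zero => simp
  | succ t ih =>
    rw [Function.iterate_succ_apply', ih, Finset.sum_range_succ]
    simp [cycStep, flipStep, add_assoc]

lemma round_full (m : ℕ) [NeZero m] (u : ZMod m → ZMod 2) (x : (ZMod m → ZMod 2) × ZMod m) :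
    (cycStep m ∘ flipStep m u)^[m] x = (x.1 + u, x.2) := by
  rw [round_iter]
  ext1
  · simp only
    congr 1
    funext j
    rw [Finset.sum_apply, Finset.sum_eq_single (j - x.2).val]
    · simp
    · intro k hk hne
      apply Pi.single_eq_of_ne
      intro h
      apply hne
      rw [h, add_sub_cancel_left, ZMod.val_natCast, Nat.mod_eq_of_lt (Finset.mem_range.1 hk)]
    · intro h
      exact absurd (Finset.mem_range.2 (ZMod.val_lt _)) h
  · simp

lemma exitCount_le_of_adj {V : Type*} [Fintype V] (G : SimpleGraph V) (A C : Finset V)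
    (hsep : ∀ a ∈ A, ∀ b, b ∉ A → b ∉ C → ¬ G.Adj a b) (f : V → V)
    (hf : Function.Injective f) (hadj : ∀ x, f x = x ∨ G.Adj x (f x)) :
    exitCount A f ≤ C.card := by
  classical
  apply Finset.card_le_card_of_injOn f
  · intro x hx
    simp only [Finset.coe_filter, Set.mem_ofPred_eq] at hx
    by_contra hC
    rcases hadj x with h | h
    · rw [h] at hx; exact hx.2 hx.1
    · exact hsep x hx.1 _ hx.2 hC h
  · exact hf.injOn

lemma cyc_adj (m : ℕ) (x : (ZMod m → ZMod 2) × ZMod m) :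
    cycStep m x = x ∨ (CCC m).Adj x (cycStep m x) := by
  by_cases h : cycStep m x = x
  · exact Or.inl h
  · right
    rw [CCC, SimpleGraph.fromRel_adj]
    exact ⟨fun e => h e.symm, Or.inl (Or.inl ⟨rfl, rfl⟩)⟩

lemma flip_adj (m : ℕ) (u : ZMod m → ZMod 2) (x : (ZMod m → ZMod 2) × ZMod m) :
    flipStep m u x = x ∨ (CCC m).Adj x (flipStep m u x) := by
  by_cases h : flipStep m u x = x
  · exact Or.inl h
  · right
    rw [CCC, SimpleGraph.fromRel_adj]
    refine ⟨fun e => h e.symm, Or.inl (Or.inr ⟨rfl, ?_⟩)⟩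
    have h2 : ∀ z : ZMod 2, z = 0 ∨ z = 1 := by decide
    rcases h2 (u x.2) with h0 | h1
    · exact absurd (by simp [flipStep, h0]) h
    · simp [flipStep, h1]

lemma exitCount_translate (m : ℕ) [NeZero m] (A C : Finset ((ZMod m → ZMod 2) × ZMod m))
    (hsep : ∀ a ∈ A, ∀ b, b ∉ A → b ∉ C → ¬ (CCC m).Adj a b)
    (d : (ZMod m → ZMod 2) × ZMod m) :
    exitCount A (fun x => x + d) ≤ 3 * m * C.card := by
  have hS := exitCount_le_of_adj _ A C hsep _ (cycStep_inj m) (cyc_adj m)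
  have hT := exitCount_le_of_adj _ A C hsep _ (flipStep_inj m d.1) (flip_adj m d.1)
  have hST := exitCount_comp A _ (cycStep m) (flipStep_inj m d.1)
  have hinj := (cycStep_inj m).comp (flipStep_inj m d.1)
  have h1 := exitCount_iterate A _ hinj (2 * C.card) (by omega) m
  have h2 := exitCount_iterate A _ (cycStep_inj m) C.card hS d.2.val
  have h3 := exitCount_comp A _ ((cycStep m)^[d.2.val]) (hinj.iterate m)
  have he : (fun x => x + d) = (cycStep m)^[d.2.val] ∘ (cycStep m ∘ flipStep m d.1)^[m] := by
    funext x
    rw [Function.comp_apply, round_full, cycStep_iter]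
    ext1 <;> simp
  rw [he]
  have h4 : d.2.val * C.card ≤ m * C.card := Nat.mul_le_mul_right _ (ZMod.val_lt _).le
  nlinarith

/-- For `m ≥ 3` and `0 < c < 1/2`, every separator `(A, B, C)`
with separation constant `c` of `CCC_m` on `n = m·2^m` vertices satisfies
`24m·|C| ≥ c·n`; in particular all such separators have size `Ω(n/log n)`. -/
theorem ccc_separator_lower_bound (m : ℕ) (hm : 3 ≤ m)
    (c : ℝ) (hc0 : 0 < c) (hc : c < 1 / 2)
    (A B C : Set ((ZMod m → ZMod 2) × ZMod m))
    (hAB : Disjoint A B) (hAC : Disjoint A C) (hBC : Disjoint B C)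
    (hcover : A ∪ B ∪ C = Set.univ)
    (hA : c * ((m * 2 ^ m : ℕ) : ℝ) ≤ A.ncard) (hAleB : A.ncard ≤ B.ncard)
    (hsep : ∀ a ∈ A, ∀ b ∈ B, ¬ (CCC m).Adj a b) :
    c * ((m * 2 ^ m : ℕ) : ℝ) ≤ (24 * m * C.ncard : ℕ) := by
  classical
  have : NeZero m := ⟨by omega⟩
  have hcard : Fintype.card ((ZMod m → ZMod 2) × ZMod m) = m * 2 ^ m := by
    simp [ZMod.card, mul_comm]
  have hmain : A.toFinset.card * (A.toFinsetᶜ).card ≤ (m * 2 ^ m) * (3 * m * C.toFinset.card) := by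
    rw [← sum_exitCount, ← hcard, ← smul_eq_mul, ← Finset.card_univ]
    apply Finset.sum_le_card_nsmul
    intro d _
    apply exitCount_translate
    intro a ha b hbA hbC
    have hb : b ∈ A ∪ B ∪ C := hcover ▸ Set.mem_univ b
    simp only [Set.mem_toFinset, Set.mem_union] at *
    exact hsep a ha b (by tauto)
  have hBle : B.toFinset.card ≤ (A.toFinsetᶜ).card := by
    apply Finset.card_le_card
    intro b hb
    simp only [Set.mem_toFinset, Finset.mem_compl] at *
    exact fun h => Set.disjoint_left.1 hAB h hb
  have hsum : A.toFinset.card + (A.toFinsetᶜ).card = m * 2 ^ m := by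
    rw [Finset.card_add_card_compl, hcard]
  rw [Set.ncard_eq_toFinset_card'] at hA
  rw [Set.ncard_eq_toFinset_card', Set.ncard_eq_toFinset_card'] at hAleB
  rw [Set.ncard_eq_toFinset_card']
  refine hA.trans ?_
  have hn : 0 < m * 2 ^ m := by positivity
  have key : A.toFinset.card ≤ 24 * m * C.toFinset.card := by
    generalize A.toFinset.card = a at *
    generalize (A.toFinsetᶜ).card = a' at *
    generalize C.toFinset.card = k at *
    generalize m * 2 ^ m = n at *
    have h1 : n ≤ 2 * a' := by omega
    have h2 : a * n ≤ (6 * m * k) * n := by nlinarith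
    have h3 := Nat.le_of_mul_le_mul_right h2 hn
    nlinarith [Nat.zero_le (m * k)]
  exact_mod_cast key
end

section
/- For every integer d ≥ 4 and every real constant 0 < c < 1/2 there exist a real constant K > 0 and a sequence of d-regular simple graphs (G_i)_{i ∈ ℕ} with |V(G_i)| → ∞ such that for every i, every separator (A, B, C) of G_i with separation constant c has size |C| ≥ |V(G_i)| / (K · log |V(G_i)|). -/
namespace LampSep

/-- Permutations obtained by composing `n` permutations each moving vertices along edges. -/
inductive Reach {V : Type} (G : SimpleGraph V) : ℕ → Equiv.Perm V → Prop
  | zero : Reach G 0 1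
  | succ (n : ℕ) (f s : Equiv.Perm V) : Reach G n f →
      (∀ v, G.Adj v (s v) ∨ s v = v) → Reach G (n + 1) (s * f)

theorem Reach.count {V : Type} [Finite V] {G : SimpleGraph V} {n : ℕ} {f : Equiv.Perm V}
    (h : Reach G n f) (A B C : Set V) (hAB : Disjoint A B) (hU : A ∪ B ∪ C = Set.univ)
    (hadj : ∀ a ∈ A, ∀ b ∈ B, ¬ G.Adj a b) :
    {a | a ∈ A ∧ f a ∈ B}.ncard ≤ n * C.ncard := by
  induction h with
  | zero =>
    have : {a | a ∈ A ∧ (1 : Equiv.Perm V) a ∈ B} = ∅ := by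
      ext a
      simp only [Set.mem_setOf_eq, Equiv.Perm.one_apply, Set.mem_empty_iff_false, iff_false]
      rintro ⟨h1, h2⟩
      exact Set.disjoint_left.1 hAB h1 h2
    rw [this]; simp
  | succ n f s hf hs ih =>
    have hsub : {a | a ∈ A ∧ (s * f) a ∈ B} ⊆ {a | a ∈ A ∧ f a ∈ B} ∪ f ⁻¹' C := by
      rintro a ⟨ha, hb⟩
      have hm : f a ∈ A ∪ B ∪ C := hU ▸ Set.mem_univ _
      rcases hm with (hm | hm) | hm
      · exfalso
        rcases hs (f a) with h1 | h1
        · exact hadj _ hm _ hb h1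
        · rw [Equiv.Perm.mul_apply, h1] at hb
          exact Set.disjoint_left.1 hAB hm hb
      · exact Or.inl ⟨ha, hm⟩
      · exact Or.inr hm
    have hC : (f ⁻¹' C).ncard = C.ncard :=
      Set.ncard_preimage_of_injective_subset_range f.injective (by simp)
    calc _ ≤ _ := Set.ncard_le_ncard hsub (Set.toFinite _)
      _ ≤ _ := Set.ncard_union_le _ _
      _ ≤ _ := by rw [hC, add_mul, one_mul]; omega

theorem Reach.mono {V : Type} {G : SimpleGraph V} {n : ℕ} {f : Equiv.Perm V}
    (h : Reach G n f) (k : ℕ) : Reach G (n + k) f := by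
  induction k with
  | zero => exact h
  | succ k ih =>
    have := Reach.succ _ f 1 ih (fun v => Or.inr rfl)
    rwa [one_mul] at this

theorem sep_bound {V : Type} [Finite V] (G : SimpleGraph V) (L : ℕ) (P : V → Equiv.Perm V)
    (hP : ∀ g, Reach G L (P g)) (hcov : ∀ u v, ∃ g, P g u = v)
    (A B C : Set V) (hAB : Disjoint A B) (hU : A ∪ B ∪ C = Set.univ)
    (hadj : ∀ a ∈ A, ∀ b ∈ B, ¬ G.Adj a b) :
    A.ncard * B.ncard ≤ Nat.card V * (L * C.ncard) := by
  classical
  haveI := Fintype.ofFinite V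
  have h1 : A.ncard * B.ncard = (A ×ˢ B).ncard := (Set.ncard_prod).symm
  rw [h1, Set.ncard_eq_toFinset_card']
  have hsub : (A ×ˢ B).toFinset ⊆ Finset.univ.biUnion (fun g : V =>
      ({a | a ∈ A ∧ P g a ∈ B} : Set V).toFinset.image (fun a => (a, P g a))) := by
    rintro ⟨a, b⟩ hab
    simp only [Set.mem_toFinset, Set.mem_prod] at hab
    obtain ⟨g, hg⟩ := hcov a b
    simp only [Finset.mem_biUnion, Finset.mem_univ, true_and, Finset.mem_image,
      Set.mem_toFinset, Set.mem_setOf_eq]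
    exact ⟨g, a, ⟨hab.1, hg ▸ hab.2⟩, by rw [hg]⟩
  refine (Finset.card_le_card hsub).trans ?_
  refine (Finset.card_biUnion_le_card_mul _ _ (L * C.ncard) ?_).trans ?_
  · intro g _
    refine Finset.card_image_le.trans ?_
    rw [← Set.ncard_eq_toFinset_card']
    exact (hP g).count A B C hAB hU hadj
  · rw [Finset.card_univ, Nat.card_eq_fintype_card]

/-- The vertex set. -/
abbrev W (m k : ℕ) : Type := ZMod m × (ZMod m → ZMod 2) × ZMod k

/-- The forward shift, flipping by `e` at the current position. -/
def shift (m k : ℕ) (e : ZMod 2) : Equiv.Perm (W m k) where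
  toFun u := (u.1 + 1, u.2.1 + Pi.single u.1 e, u.2.2)
  invFun u := (u.1 - 1, u.2.1 - Pi.single (u.1 - 1) e, u.2.2)
  left_inv u := by simp
  right_inv u := by simp

/-- Translation in the last coordinate. -/
def trans (m k : ℕ) (s : ZMod k) : Equiv.Perm (W m k) where
  toFun u := (u.1, u.2.1, u.2.2 + s)
  invFun u := (u.1, u.2.1, u.2.2 - s)
  left_inv u := by simp
  right_inv u := by simp

/-- The wrapped butterfly graph times a complete graph. -/
def gr (m k : ℕ) : SimpleGraph (W m k) :=
  SimpleGraph.fromRel fun u v => (∃ e, v = shift m k e u) ∨ ∃ s, v = trans m k s u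

theorem gr_step (m k : ℕ) (s : Equiv.Perm (W m k))
    (h : (∃ e, s = shift m k e) ∨ ∃ t, s = trans m k t) (v : W m k) :
    (gr m k).Adj v (s v) ∨ s v = v := by
  by_cases hv : s v = v
  · exact Or.inr hv
  · left
    rw [gr, SimpleGraph.fromRel_adj]
    refine ⟨fun h => hv h.symm, Or.inl ?_⟩
    rcases h with ⟨e, rfl⟩ | ⟨e, rfl⟩
    · exact Or.inl ⟨e, rfl⟩
    · exact Or.inr ⟨e, rfl⟩

theorem route (m k : ℕ) (y : ℕ → ZMod 2) (n : ℕ) :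
    ∃ f, Reach (gr m k) n f ∧ ∀ u : W m k, f u =
      (u.1 + n, u.2.1 + ∑ j ∈ Finset.range n, Pi.single (u.1 + (j : ZMod m)) (y j), u.2.2) := by
  induction n with
  | zero => exact ⟨1, Reach.zero, fun u => by simp⟩
  | succ n ih =>
    obtain ⟨f, hf, hu⟩ := ih
    refine ⟨_, Reach.succ n f (shift m k (y n)) hf (gr_step m k _ (Or.inl ⟨_, rfl⟩)), fun u => ?_⟩
    rw [Equiv.Perm.mul_apply, hu, Finset.sum_range_succ]
    simp [shift, add_assoc]

theorem routes (m k : ℕ) [NeZero m] (g : W m k) :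
    ∃ f, Reach (gr m k) (2 * m + 1) f ∧ ∀ u : W m k, f u =
      (u.1 + g.1, u.2.1 + (fun p => g.2.1 (p - u.1)), u.2.2 + g.2.2) := by
  obtain ⟨f, hf, hu⟩ := route m k (fun j => if j < m then g.2.1 j else 0) (m + g.1.val)
  have h1 := Reach.succ _ f (trans m k g.2.2) hf (gr_step m k _ (Or.inr ⟨_, rfl⟩))
  have hlt := ZMod.val_lt g.1
  have h2 := h1.mono (2 * m + 1 - (m + g.1.val + 1))
  rw [Nat.add_sub_cancel' (by omega)] at h2
  refine ⟨_, h2, fun u => ?_⟩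
  rw [Equiv.Perm.mul_apply, hu]
  simp only [trans, Equiv.coe_fn_mk]
  refine Prod.ext (by simp) (Prod.ext ?_ rfl)
  simp only
  congr 1
  ext p
  rw [Finset.sum_apply]
  have hlt' := ZMod.val_lt (p - u.1)
  rw [Finset.sum_eq_single (p - u.1).val]
  · simp [hlt']
  · intro j hj hne
    by_cases hjm : j < m
    · rw [Pi.single_apply, if_neg]
      rintro rfl
      apply hne
      rw [add_sub_cancel_left, ZMod.val_natCast, Nat.mod_eq_of_lt hjm]
    · simp [hjm]
  · intro h
    exfalso; apply h
    rw [Finset.mem_range]; omega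

theorem gr_sep (m k : ℕ) [NeZero m] [NeZero k]
    (A B C : Set (W m k)) (hAB : Disjoint A B) (hU : A ∪ B ∪ C = Set.univ)
    (hadj : ∀ a ∈ A, ∀ b ∈ B, ¬ (gr m k).Adj a b) :
    A.ncard * B.ncard ≤ Nat.card (W m k) * ((2 * m + 1) * C.ncard) := by
  choose P hP hu using routes m k
  refine sep_bound (gr m k) _ P hP (fun u v => ?_) A B C hAB hU hadj
  refine ⟨(v.1 - u.1, fun p => (v.2.1 - u.2.1) (u.1 + p), v.2.2 - u.2.2), ?_⟩
  rw [hu]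
  refine Prod.ext (by simp) (Prod.ext ?_ (by simp))
  ext p
  simp

theorem gr_card (m k : ℕ) [NeZero m] [NeZero k] : Nat.card (W m k) = m * (2 ^ m * k) := by
  simp [W, Nat.card_prod, Nat.card_eq_fintype_card, ZMod.card]

theorem gr_nbr (m k : ℕ) (u : W m k) (hm : (1 : ZMod m) ≠ 0) :
    (gr m k).neighborSet u =
      (({(u.1 + 1, u.2.1, u.2.2), (u.1 + 1, u.2.1 + Pi.single u.1 1, u.2.2),
        (u.1 - 1, u.2.1, u.2.2), (u.1 - 1, u.2.1 + Pi.single (u.1 - 1) 1, u.2.2)} : Set (W m k)) ∪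
        (fun t => (u.1, u.2.1, t)) '' {t | t ≠ u.2.2}) := by
  obtain ⟨i, x, t⟩ := u
  have hz : ∀ e : ZMod 2, e = 0 ∨ e = 1 := by decide
  have hneg : ∀ j : ZMod m, -(Pi.single j 1 : ZMod m → ZMod 2) = Pi.single j 1 := by
    intro j; ext p; exact ZMod.neg_eq_self_mod_two _
  ext v
  rw [SimpleGraph.mem_neighborSet, gr, SimpleGraph.fromRel_adj]
  constructor
  · rintro ⟨hne, (⟨e, rfl⟩ | ⟨s, rfl⟩) | (⟨e, h⟩ | ⟨s, h⟩)⟩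
    · left
      rcases hz e with rfl | rfl <;> simp [shift]
    · right
      refine ⟨t + s, ?_, rfl⟩
      rintro h
      apply hne
      simp only [trans, Equiv.coe_fn_mk, h]
    · left
      have h' : v = (shift m k e).symm (i, x, t) := by rw [h]; simp
      rw [h']
      rcases hz e with rfl | rfl
      · simp [shift]
      · simp [shift, sub_eq_add_neg, hneg]
    · right
      obtain ⟨i', x', t'⟩ := v
      simp only [trans, Equiv.coe_fn_mk, Prod.mk.injEq] at h
      obtain ⟨rfl, rfl, rfl⟩ := h
      refine ⟨t', ?_, rfl⟩
      rintro h
      apply hne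
      exact Prod.ext rfl (Prod.ext rfl h.symm)
  · rintro ((rfl | rfl | rfl | rfl) | ⟨t', ht, rfl⟩)
    · exact ⟨by simp [hm], Or.inl (Or.inl ⟨0, by simp [shift]⟩)⟩
    · exact ⟨by simp [hm], Or.inl (Or.inl ⟨1, by simp [shift]⟩)⟩
    · exact ⟨by simp [eq_sub_iff_add_eq, hm], Or.inr (Or.inl ⟨0, by simp [shift]⟩)⟩
    · refine ⟨by simp [eq_sub_iff_add_eq, hm], Or.inr (Or.inl ⟨1, ?_⟩)⟩
      simp only [shift, Equiv.coe_fn_mk]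
      rw [add_assoc, ← sub_neg_eq_add (Pi.single (i - 1) 1), hneg]
      simp
    · exact ⟨by simpa using fun h => ht h.symm, Or.inl (Or.inr ⟨t' - t, by simp [trans]⟩)⟩

theorem gr_deg (m k : ℕ) [NeZero m] [NeZero k] (hm : 3 ≤ m) (u : W m k) :
    Nat.card ((gr m k).neighborSet u) = 4 + (k - 1) := by
  have h1 : (1 : ZMod m) ≠ 0 := by
    haveI : Fact (1 < m) := ⟨by omega⟩
    exact one_ne_zero
  have h2 : (1 : ZMod m) + 1 ≠ 0 := by
    intro h
    have : ((2 : ℕ) : ZMod m) = 0 := by push_cast; rw [← h]; norm_num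
    rw [ZMod.natCast_eq_zero_iff] at this
    exact absurd (Nat.le_of_dvd (by norm_num) this) (by omega)
  have h3 : ∀ i : ZMod m, i + 1 ≠ i - 1 := by
    intro i h
    apply h2
    linear_combination h
  have hs : ∀ j : ZMod m, (Pi.single j 1 : ZMod m → ZMod 2) ≠ 0 := by
    intro j h
    have := congrFun h j
    simp at this
  rw [gr_nbr m k u h1, Nat.card_coe_set_eq, Set.ncard_union_eq]
  · congr 1
    · rw [Set.ncard_insert_of_notMem, Set.ncard_insert_of_notMem, Set.ncard_pair]
      · simp [Prod.ext_iff, hs]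
      · simp [h3]
      · simp [Prod.ext_iff, h3, hs]
    · rw [Set.ncard_image_of_injective]
      · have : {t : ZMod k | t ≠ u.2.2} = {u.2.2}ᶜ := rfl
        rw [this, Set.ncard_compl, Set.ncard_singleton, Nat.card_eq_fintype_card, ZMod.card]
      · intro a b h
        simpa using h
  · rw [Set.disjoint_left]
    rintro v (rfl | rfl | rfl | rfl) ⟨t, ht, h⟩ <;> simp [eq_sub_iff_add_eq, h1] at h
  
end LampSep

/-- For every `d ≥ 4` and every `0 < c < 1/2` there are a
constant `K > 0` and a sequence of `d`-regular simple graphs `(G_i)_{i ∈ ℕ}`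
with `|V(G_i)| → ∞` such that for every `i`, every separator `(A, B, C)` of
`G_i` with separation constant `c` has size
`|C| ≥ |V(G_i)|/(K·log |V(G_i)|)`. -/
theorem exists_d_regular_sequence_large_separators
    (d : ℕ) (hd : 4 ≤ d) (c : ℝ) (hc0 : 0 < c) (hc : c < 1 / 2) :
    ∃ K : ℝ, 0 < K ∧
    ∃ (V : ℕ → Type) (G : ∀ i, SimpleGraph (V i)),
      (∀ i, Finite (V i)) ∧
      (∀ i, ∀ v : V i, Nat.card ((G i).neighborSet v) = d) ∧
      Filter.Tendsto (fun i => Nat.card (V i)) Filter.atTop Filter.atTop ∧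
      ∀ i, ∀ A B C : Set (V i),
        Disjoint A B → Disjoint A C → Disjoint B C → A ∪ B ∪ C = Set.univ →
        c * (Nat.card (V i) : ℝ) ≤ A.ncard → A.ncard ≤ B.ncard →
        (∀ a ∈ A, ∀ b ∈ B, ¬ (G i).Adj a b) →
        (Nat.card (V i) : ℝ) / (K * Real.log (Nat.card (V i))) ≤ C.ncard := by
  have hl2 : 0 < Real.log 2 := Real.log_pos (by norm_num)
  have hk : NeZero (d - 3) := ⟨by omega⟩
  refine ⟨3 / (Real.log 2 * c ^ 2), by positivity, fun i => LampSep.W (i + 3) (d - 3),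
    fun i => LampSep.gr (i + 3) (d - 3), fun i => inferInstance, fun i v => ?_, ?_, ?_⟩
  · rw [LampSep.gr_deg _ _ (by omega)]; omega
  · refine Filter.tendsto_atTop_mono (fun i => ?_) Filter.tendsto_id
    rw [LampSep.gr_card]
    have h1 : 0 < 2 ^ (i + 3) * (d - 3) := Nat.mul_pos (by positivity) (by omega)
    exact le_trans (by simp) (Nat.le_mul_of_pos_right (i + 3) h1)
  · intro i A B C hAB _ _ hU hA hAleB hadj
    have key := LampSep.gr_sep (i + 3) (d - 3) A B C hAB hU hadj
    have hcard := LampSep.gr_card (i + 3) (d - 3)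
    set n := Nat.card (LampSep.W (i + 3) (d - 3)) with hn
    have hnge : 2 ^ (i + 3) ≤ n := by
      rw [hcard]
      have : 1 ≤ d - 3 := by omega
      calc 2 ^ (i + 3) = 1 * (2 ^ (i + 3) * 1) := by ring
        _ ≤ _ := by gcongr; omega
    have hnR : (2 : ℝ) ^ (i + 3) ≤ n := by exact_mod_cast hnge
    have hn0 : (0 : ℝ) < n := lt_of_lt_of_le (by positivity) hnR
    have hlog : ((i + 3 : ℕ) : ℝ) * Real.log 2 ≤ Real.log n := by
      rw [← Real.log_pow]
      exact Real.log_le_log (by positivity) hnR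
    have hlogpos : 0 < Real.log n := lt_of_lt_of_le (by positivity) hlog
    have keyR : (A.ncard : ℝ) * B.ncard ≤ n * ((2 * ((i + 3 : ℕ) : ℝ) + 1) * C.ncard) := by
      exact_mod_cast key
    have hB : c * (n : ℝ) ≤ B.ncard := hA.trans (by exact_mod_cast hAleB)
    have h1 : (c * n) * (c * n) ≤ (A.ncard : ℝ) * B.ncard :=
      mul_le_mul hA hB (by positivity) (by positivity)
    have h2 : c ^ 2 * n ≤ (2 * ((i + 3 : ℕ) : ℝ) + 1) * C.ncard := by
      have := h1.trans keyR
      refine le_of_mul_le_mul_left (a := (n : ℝ)) ?_ hn0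
      linarith
    have h3 : (2 * ((i + 3 : ℕ) : ℝ) + 1) * C.ncard ≤ 3 * ((i + 3 : ℕ) : ℝ) * C.ncard := by
      apply mul_le_mul_of_nonneg_right _ (by positivity)
      push_cast
      have : (0 : ℝ) ≤ i := by positivity
      linarith
    have h4 : c ^ 2 * n * Real.log 2 ≤ 3 * Real.log n * C.ncard := by
      calc c ^ 2 * n * Real.log 2 ≤ 3 * ((i + 3 : ℕ) : ℝ) * C.ncard * Real.log 2 := by
            exact mul_le_mul_of_nonneg_right (h2.trans h3) hl2.le
        _ = 3 * (((i + 3 : ℕ) : ℝ) * Real.log 2) * C.ncard := by ring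
        _ ≤ _ := by gcongr
    rw [div_le_iff₀ (by positivity)]
    have h5 : (C.ncard : ℝ) * (3 / (Real.log 2 * c ^ 2) * Real.log n)
        = 3 * Real.log n * C.ncard / (Real.log 2 * c ^ 2) := by ring
    rw [h5, le_div_iff₀ (by positivity)]
    linarith
end
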